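/- Let f : I → ℝ be left differentiable at x with left derivative f'⁻(x). If uₙ < vₙ < x for all n, uₙ → x, and limsupₙ (x - uₙ)/(vₙ - uₙ) < ∞, then (f(vₙ) - f(uₙ))/(vₙ - uₙ) → f'⁻(x). -/

import Mathlib

open Filter Topology

theorem stmt2 (I : Set ℝ) (hIopen : IsOpen I) (hIconn : I.OrdConnected)
    (f : ℝ → ℝ) (x : ℝ) (hx : x ∈ I) (d : ℝ)
    (hf : HasDerivWithinAt f d (Set.Iic x) x)
    (u v : ℕ → ℝ) (h1 : ∀ n, u n < v n) (h2 : ∀ n, v n < x)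
    (hu : Tendsto u atTop (𝓝 x))
    (hbd : ∃ C : ℝ, ∀ᶠ n in atTop, (x - u n) / (v n - u n) ≤ C) :
    Tendsto (fun n => (f (v n) - f (u n)) / (v n - u n)) atTop (𝓝 d) := by
  have hu_within : Tendsto u atTop (𝓝[Set.Iic x] x) :=
    tendsto_nhdsWithin_iff.2 ⟨hu, .of_forall fun n => ((h1 n).trans (h2 n)).le⟩
  have hv_within : Tendsto v atTop (𝓝[Set.Iic x] x) :=
    tendsto_nhdsWithin_iff.2
      ⟨tendsto_of_tendsto_of_tendsto_of_le_of_le hu tendsto_const_nhds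
        (fun n => (h1 n).le) (fun n => (h2 n).le), .of_forall fun n => (h2 n).le⟩
  have hu_bigO : (fun n => u n - x) =O[atTop] fun n => v n - u n := by
    obtain ⟨C, hC⟩ := hbd
    refine Asymptotics.IsBigO.of_bound C ?_
    filter_upwards [hC] with n hn
    rw [div_le_iff₀ (sub_pos.2 (h1 n))] at hn
    rwa [Real.norm_eq_abs, Real.norm_eq_abs, abs_of_pos (sub_pos.2 (h1 n)), abs_sub_comm,
      abs_of_pos (sub_pos.2 ((h1 n).trans (h2 n)))]
  have hv_bigO : (fun n => v n - x) =O[atTop] fun n => v n - u n :=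
    (hu_bigO.add (Asymptotics.isBigO_refl _ _)).congr_left fun n => by ring
  have hlittle := hasDerivWithinAt_iff_isLittleO.1 hf
  have hdiff := ((hlittle.comp_tendsto hv_within).trans_isBigO hv_bigO).sub
    ((hlittle.comp_tendsto hu_within).trans_isBigO hu_bigO)
  refine tendsto_sub_nhds_zero_iff.1 (hdiff.tendsto_div_nhds_zero.congr fun n => ?_)
  have hne : v n - u n ≠ 0 := (sub_pos.2 (h1 n)).ne'
  simp only [Function.comp_apply, smul_eq_mul]
  field_simp
  ring
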